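/- arXiv:2306.07852 — 2 statements merged into one kernel-verified Lean document; each statement's English description precedes it below -/
import Mathlib

section
/- The cubic complementarity function φ: ℝ² → ℝ defined by φ(a,b) = |a − b|³ − a³ − b³ satisfies: (i) for all a, b ∈ ℝ, φ(a,b) = 0 if and only if a ≥ 0, b ≥ 0 and a·b = 0; and (ii) φ is twice continuously differentiable on ℝ². -/
/-- The cubic complementarity function `φ(a,b) = |a - b|³ - a³ - b³`. -/
noncomputable def cubicPhi (a b : ℝ) : ℝ := |a - b| ^ 3 - a ^ 3 - b ^ 3

/-!
Write `m` and `M` for the minimum and the maximum of `a` and `b`. Since `|a - b| = M - m`,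
`φ(a, b) = -m (3M² - 3Mm + 2m²)`, and the quadratic form in parentheses is positive definite.
So `φ(a, b)` vanishes exactly when `m = 0`, which is the complementarity condition.

The smoothness rests on `|x|³ = x²|x|`: differentiating `xⁿ|x|` gives a multiple of `xⁿ⁻¹|x|`,
so `xⁿ|x|` can be differentiated `n` times before one reaches `|x|`, which is still continuous.
-/

theorem min_eq_zero_iff_nonneg_and_mul_eq_zero {R : Type*} [MulZeroClass R] [NoZeroDivisors R]
    [LinearOrder R] {a b : R} : min a b = 0 ↔ 0 ≤ a ∧ 0 ≤ b ∧ a * b = 0 := by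
  rw [min_eq_iff, mul_eq_zero]
  constructor
  · rintro (⟨rfl, hb⟩ | ⟨rfl, ha⟩)
    · exact ⟨le_rfl, hb, .inl rfl⟩
    · exact ⟨ha, le_rfl, .inr rfl⟩
  · rintro ⟨ha, hb, rfl | rfl⟩
    · exact .inl ⟨rfl, hb⟩
    · exact .inr ⟨rfl, ha⟩

theorem hasDerivAt_pow_succ_mul_abs (n : ℕ) (x : ℝ) :
    HasDerivAt (fun y : ℝ => y ^ (n + 1) * |y|) ((n + 2) * (x ^ n * |x|)) x := by
  -- The product rule applies away from `0`; the formula extends to `0` by continuity.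
  refine hasDerivAt_of_hasDerivAt_of_ne' (x := 0) (g := fun y => (n + 2) * (y ^ n * |y|))
    (fun y hy => ?_) (by fun_prop) (by fun_prop) x
  refine ((hasDerivAt_pow (n + 1) y).mul (hasDerivAt_abs hy)).congr_deriv ?_
  calc ((n + 1 : ℕ) : ℝ) * y ^ n * |y| + y ^ (n + 1) * (SignType.sign y : ℝ)
      = (n + 1) * (y ^ n * |y|) + y ^ n * (y * (SignType.sign y : ℝ)) := by push_cast; ring
    _ = (n + 2) * (y ^ n * |y|) := by rw [self_mul_sign]; ring

theorem contDiff_pow_mul_abs (n : ℕ) : ContDiff ℝ n (fun x : ℝ => x ^ n * |x|) := by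
  induction n with
  | zero => exact contDiff_zero.2 (by fun_prop)
  | succ n ih =>
    have hderiv := hasDerivAt_pow_succ_mul_abs n
    push_cast
    refine contDiff_succ_iff_deriv.2 ⟨fun x => (hderiv x).differentiableAt, by simp, ?_⟩
    rw [funext fun x => (hderiv x).deriv]
    exact contDiff_const.mul ih

theorem cubicPhi_eq_neg_min_mul (a b : ℝ) :
    cubicPhi a b =
      -(min a b * (3 * max a b ^ 2 - 3 * max a b * min a b + 2 * min a b ^ 2)) := by
  have hcubes : max a b ^ 3 + min a b ^ 3 = a ^ 3 + b ^ 3 := by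
    rcases le_total a b with h | h <;> simp [h, add_comm]
  rw [cubicPhi, sub_sub, ← hcubes, ← max_sub_min_eq_abs']
  ring

theorem cubicPhi_eq_zero_iff_min_eq_zero {a b : ℝ} : cubicPhi a b = 0 ↔ min a b = 0 := by
  rw [cubicPhi_eq_neg_min_mul, neg_eq_zero]
  refine ⟨fun h => ?_, fun h => by rw [h, zero_mul]⟩
  by_contra hmin
  have hform : 0 < 3 * max a b ^ 2 - 3 * max a b * min a b + 2 * min a b ^ 2 := by
    calc 0 < 3 * (max a b - min a b / 2) ^ 2 + 5 / 4 * min a b ^ 2 := by positivity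
      _ = _ := by ring
  exact mul_ne_zero hmin hform.ne' h

theorem contDiff_cubicPhi : ContDiff ℝ 2 (fun p : ℝ × ℝ => cubicPhi p.1 p.2) := by
  have habs : ContDiff ℝ 2 (fun x : ℝ => |x| ^ 3) := by
    simpa only [pow_succ _ 2, sq_abs, Nat.cast_ofNat] using contDiff_pow_mul_abs 2
  have hdiff : ContDiff ℝ 2 (fun p : ℝ × ℝ => |p.1 - p.2| ^ 3) :=
    habs.comp (contDiff_fst.sub contDiff_snd)
  exact (hdiff.sub (contDiff_fst.pow 3)).sub (contDiff_snd.pow 3)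

/-- `φ(a,b) = 0` iff `a ≥ 0`, `b ≥ 0` and `a·b = 0`; moreover `φ` is
twice continuously differentiable on `ℝ²`. -/
theorem cubicPhi_zero_iff_and_contDiff :
    (∀ a b : ℝ, cubicPhi a b = 0 ↔ (0 ≤ a ∧ 0 ≤ b ∧ a * b = 0)) ∧
    ContDiff ℝ 2 (fun p : ℝ × ℝ => cubicPhi p.1 p.2) :=
  ⟨fun _ _ => cubicPhi_eq_zero_iff_min_eq_zero.trans min_eq_zero_iff_nonneg_and_mul_eq_zero,
    contDiff_cubicPhi⟩
end

section
/- Let J: ℝⁿ → ℝ and g: ℝⁿ × [0,1] → ℝᵐ be twice continuously differentiable, let a ∈ ℝⁿ satisfy gᵢ(a, 0) < 0 for every i, and let ρ_a be the associated homotopy map. Then: (i) the Jacobian of the map (u, μ) ↦ ρ_a(0, u, μ) at the point (a, 0) is the block matrix with blocks Iₙ (identity) and 0 in the first row and with lower-right block diag(−3g₁(a,0)², …, −3gₘ(a,0)²), and in particular is nonsingular; (ii) consequently there exist ε > 0 and continuously differentiable functions u: [0, ε) → ℝⁿ and μ: [0, ε) → ℝᵐ with u(0) = a, μ(0) = 0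 and ρ_a(λ, u(λ), μ(λ)) = 0 for all λ ∈ [0, ε), so that near λ = 0 the zero set of ρ_a is locally a graph over the homotopy parameter λ. -/
/-- The homotopy map
`ρ_a(λ, u, μ) = (λ(∇ᵤJ(u) + ∇ᵤg(u,λ)ᵀμ) + (1-λ)(u - a), (φ(μᵢ, -gᵢ(u,λ)))ᵢ)`. -/
noncomputable def homotopyMap {n m : ℕ}
    (J : EuclideanSpace ℝ (Fin n) → ℝ)
    (g : EuclideanSpace ℝ (Fin n) → ℝ → Fin m → ℝ)
    (a : EuclideanSpace ℝ (Fin n))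
    (lam : ℝ) (u : EuclideanSpace ℝ (Fin n)) (μ : Fin m → ℝ) :
    EuclideanSpace ℝ (Fin n) × (Fin m → ℝ) :=
  (lam • (gradient J u + ∑ i, μ i • gradient (fun v => g v lam i) u)
      + (1 - lam) • (u - a),
   fun i => cubicPhi (μ i) (-(g u lam i)))

/-!
For `x ≤ y` the function `φ(x, y)` is the polynomial `x (-3 y² + 3 x y - 2 x²)`, so for `b > 0` it
vanishes on the axis `x = 0` near `(0, b)` and has the differential `-3 b² dx` at `(0, b)`.
All constraints are inactive at `(a, 0)`, hence the Jacobian is block diagonal. Moreover, the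
multipliers can stay zero along the curve: with `μ = 0` the first component is the convex homotopy
`λ ∇J(u) + (1 - λ)(u - a)`, whose derivative in `u` at `λ = 0` is the identity, so the implicit
function theorem provides `u`, and the constraints remain inactive for small `λ` by continuity.
-/

open Filter Set Topology

section ImplicitCurve

variable {𝕜 : Type*} [RCLike 𝕜] {n : WithTop ℕ∞}
  {E F G : Type*} [NormedAddCommGroup E] [NormedSpace 𝕜 E] [CompleteSpace E]
  [NormedAddCommGroup F] [NormedSpace 𝕜 F] [CompleteSpace F]
  [NormedAddCommGroup G] [NormedSpace 𝕜 G] [CompleteSpace G]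

theorem exists_contDiffAt_implicit_of_hasFDerivAt_equiv {f : E × F → G} {x : E} {y : F}
    (hf : ContDiffAt 𝕜 n f (x, y)) (hn : n ≠ 0) (f' : F ≃L[𝕜] G)
    (hf' : HasFDerivAt (fun z => f (x, z)) (f' : F →L[𝕜] G) y) :
    ∃ ψ : E → F, ψ x = y ∧ ContDiffAt 𝕜 n ψ x ∧ ∀ᶠ t in 𝓝 x, f (t, ψ t) = f (x, y) := by
  have partial_eq : fderiv 𝕜 f (x, y) ∘L .inr 𝕜 E F = f' :=
    ((hf.differentiableAt hn).hasFDerivAt.comp y (hasFDerivAt_prodMk_right x y)).unique hf'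
  have invertible : (fderiv 𝕜 f (x, y) ∘L .inr 𝕜 E F).IsInvertible := ⟨f', partial_eq.symm⟩
  exact ⟨hf.implicitFunction hn invertible, hf.implicitFunction_apply_self hn invertible,
    hf.contDiffAt_implicitFunction hn invertible,
    hf.eventually_apply_implicitFunction hn invertible⟩

theorem exists_contDiffAt_convexHomotopy_eq_zero {f : E → E} {a : E}
    (hf : ContDiffAt 𝕜 n f a) (hn : n ≠ 0) :
    ∃ u : 𝕜 → E, u 0 = a ∧ ContDiffAt 𝕜 n u 0 ∧
      ∀ᶠ t in 𝓝 0, t • f (u t) + (1 - t) • (u t - a) = 0 := by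
  let H : 𝕜 × E → E := fun q => q.1 • f q.2 + (1 - q.1) • (q.2 - a)
  have contDiffAt_H : ContDiffAt 𝕜 n H (0, a) :=
    (contDiffAt_fst.smul (hf.comp (0, a) contDiffAt_snd)).add
      ((contDiffAt_const.sub contDiffAt_fst).smul (contDiffAt_snd.sub contDiffAt_const))
  have hasFDerivAt_H : HasFDerivAt (fun v => H (0, v))
      (ContinuousLinearEquiv.refl 𝕜 E : E →L[𝕜] E) a := by
    simpa [H] using! (hasFDerivAt_id (𝕜 := 𝕜) a).sub_const a
  simpa [H] using
    exists_contDiffAt_implicit_of_hasFDerivAt_equiv contDiffAt_H hn _ hasFDerivAt_H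

end ImplicitCurve

theorem contDiffAt_gradient {E : Type*} [NormedAddCommGroup E] [InnerProductSpace ℝ E]
    [CompleteSpace E] {n : WithTop ℕ∞} {f : E → ℝ} {x : E} (hf : ContDiffAt ℝ (n + 1) f x) :
    ContDiffAt ℝ n (gradient f) x :=
  (InnerProductSpace.toDual ℝ E).symm.contDiff.contDiffAt.comp x hf.fderiv_right_succ

theorem cubicPhi_of_le {a b : ℝ} (hab : a ≤ b) :
    cubicPhi a b = a * (-3 * b ^ 2 + 3 * a * b - 2 * a ^ 2) := by
  rw [cubicPhi, abs_of_nonpos (sub_nonpos.2 hab)]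
  ring

theorem cubicPhi_zero_left {b : ℝ} (hb : 0 ≤ b) : cubicPhi 0 b = 0 := by
  rw [cubicPhi_of_le hb, zero_mul]

theorem hasFDerivAt_cubicPhi_comp_of_eq_zero {E : Type*} [NormedAddCommGroup E] [NormedSpace ℝ E]
    {x y : E → ℝ} {x' : E →L[ℝ] ℝ} {p : E} (hx : HasFDerivAt x x' p) (hy : DifferentiableAt ℝ y p)
    (hxp : x p = 0) (hyp : 0 < y p) :
    HasFDerivAt (fun q => cubicPhi (x q) (y q)) ((-3 * y p ^ 2) • x') p := by
  have eventually_eq_polynomial : (fun q => cubicPhi (x q) (y q)) =ᶠ[𝓝 p]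
      fun q => x q * (-3 * y q ^ 2 + 3 * x q * y q - 2 * x q ^ 2) :=
    (hx.continuousAt.eventually_lt hy.continuousAt (hxp ▸ hyp)).mono fun _ hq =>
      cubicPhi_of_le hq.le
  have differentiableAt_cofactor :
      DifferentiableAt ℝ (fun q => -3 * y q ^ 2 + 3 * x q * y q - 2 * x q ^ 2) p := by
    have := hx.differentiableAt
    fun_prop
  refine ((hx.mul differentiableAt_cofactor.hasFDerivAt).congr_of_eventuallyEq
    eventually_eq_polynomial).congr_fderiv ?_
  ext
  simp [hxp]

theorem eventually_forall_lt_const_along_curve {T X Y ι : Type*} [TopologicalSpace T]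
    [TopologicalSpace X] [TopologicalSpace Y] [LinearOrder Y] [ClosedIciTopology Y] [Finite ι]
    {g : X → T → ι → Y} {u : T → X} {s : Set T} {t₀ : T} {c : Y}
    (hu : ContinuousWithinAt u s t₀)
    (hg : ∀ i, ContinuousWithinAt (fun q : X × T => g q.1 q.2 i) (univ ×ˢ s) (u t₀, t₀))
    (hlt : ∀ i, g (u t₀) t₀ i < c) :
    ∀ᶠ t in 𝓝[s] t₀, ∀ i, g (u t) t i < c := by
  have graph_tendsto : Tendsto (fun t => (u t, t)) (𝓝[s] t₀) (𝓝[univ ×ˢ s] (u t₀, t₀)) :=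
    (hu.prodMk continuousWithinAt_id).tendsto_nhdsWithin fun _ ht => ⟨mem_univ _, ht⟩
  exact eventually_all.2 fun i =>
    ((hg i).tendsto.comp graph_tendsto).eventually_lt_const (hlt i)

section HomotopyMap

variable {n m : ℕ} {J : EuclideanSpace ℝ (Fin n) → ℝ}
  {g : EuclideanSpace ℝ (Fin n) → ℝ → Fin m → ℝ} {a : EuclideanSpace ℝ (Fin n)}

/-- The Jacobian of `(u, μ) ↦ ρ_a(0, u, μ)` at `(a, 0)`: the block matrix with diagonal blocks
`Iₙ` and `diag(-3 gᵢ(a, 0)²)`, encoded as a continuous linear map. -/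
noncomputable def startJacobian (g : EuclideanSpace ℝ (Fin n) → ℝ → Fin m → ℝ)
    (a : EuclideanSpace ℝ (Fin n)) :
    EuclideanSpace ℝ (Fin n) × (Fin m → ℝ) →L[ℝ] EuclideanSpace ℝ (Fin n) × (Fin m → ℝ) :=
  (ContinuousLinearMap.id ℝ _).prodMap
    (.piMap fun i => (-3 * g a 0 i ^ 2) • ContinuousLinearMap.id ℝ ℝ)

theorem bijective_startJacobian (hg : ∀ i, g a 0 i ≠ 0) :
    Function.Bijective (startJacobian g a) :=
  Function.bijective_id.prodMap <| Function.Bijective.piMap fun i =>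
    mulLeft_bijective₀ _ (mul_ne_zero (by norm_num) (pow_ne_zero 2 (hg i)))

theorem hasFDerivAt_homotopyMap_start
    (hg : ∀ i, DifferentiableAt ℝ (fun v => g v 0 i) a) (ha : ∀ i, g a 0 i < 0) :
    HasFDerivAt (fun p : EuclideanSpace ℝ (Fin n) × (Fin m → ℝ) => homotopyMap J g a 0 p.1 p.2)
      (startJacobian g a) (a, 0) := by
  have first_component : HasFDerivAt
      (fun p : EuclideanSpace ℝ (Fin n) × (Fin m → ℝ) => (homotopyMap J g a 0 p.1 p.2).1)
      (.fst ℝ _ _) (a, 0) := by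
    simpa [homotopyMap] using hasFDerivAt_fst.sub_const a
  refine first_component.prodMk (hasFDerivAt_pi'.2 fun i => ?_)
  have multiplier : HasFDerivAt (fun p : EuclideanSpace ℝ (Fin n) × (Fin m → ℝ) => p.2 i)
      (.proj i ∘L .snd ℝ _ _) (a, 0) :=
    hasFDerivAt_pi'.1 hasFDerivAt_snd i
  have slack : DifferentiableAt ℝ
      (fun p : EuclideanSpace ℝ (Fin n) × (Fin m → ℝ) => -g p.1 0 i) (a, 0) :=
    ((hg i).comp (f := Prod.fst) (a, 0) differentiableAt_fst).neg
  refine (hasFDerivAt_cubicPhi_comp_of_eq_zero multiplier slack rfl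
    (neg_pos.2 (ha i))).congr_fderiv ?_
  ext <;> simp

theorem homotopyMap_zero_multiplier {lam : ℝ} {u : EuclideanSpace ℝ (Fin n)}
    (hg : ∀ i, g u lam i ≤ 0) :
    homotopyMap J g a lam u 0 = (lam • gradient J u + (1 - lam) • (u - a), 0) := by
  ext i
  · simp [homotopyMap]
  · exact cubicPhi_zero_left (neg_nonneg.2 (hg i))

theorem exists_contDiffOn_homotopyMap_eq_zero (hJ : ContDiffAt ℝ 2 J a)
    (hg : ∀ i, ContinuousWithinAt (fun q : EuclideanSpace ℝ (Fin n) × ℝ => g q.1 q.2 i)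
      (univ ×ˢ Icc 0 1) (a, 0))
    (ha : ∀ i, g a 0 i < 0) :
    ∃ ε > (0 : ℝ), ∃ u : ℝ → EuclideanSpace ℝ (Fin n), ContDiffOn ℝ 1 u (Ico 0 ε) ∧
      u 0 = a ∧ ∀ lam ∈ Ico (0 : ℝ) ε, homotopyMap J g a lam (u lam) 0 = 0 := by
  have contDiffAt_grad : ContDiffAt ℝ 1 (gradient J) a :=
    contDiffAt_gradient (by rwa [one_add_one_eq_two])
  obtain ⟨u, rfl, hu, hzero⟩ := exists_contDiffAt_convexHomotopy_eq_zero contDiffAt_grad one_ne_zero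
  have hinactive : ∀ᶠ lam in 𝓝[≥] 0, ∀ i, g (u lam) lam i < 0 := by
    rw [← nhdsWithin_Icc_eq_nhdsGE zero_lt_one]
    exact eventually_forall_lt_const_along_curve hu.continuousAt.continuousWithinAt hg ha
  have hsmooth : ∀ᶠ lam in 𝓝 0, ContDiffAt ℝ 1 u lam := hu.eventually (by simp)
  obtain ⟨ε, hε, hsub⟩ := mem_nhdsGE_iff_exists_Ico_subset.1
    (((hsmooth.and hzero).filter_mono nhdsWithin_le_nhds).and hinactive)
  refine ⟨ε, hε, u, fun lam hlam => (hsub hlam).1.1.contDiffWithinAt, rfl, fun lam hlam => ?_⟩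
  obtain ⟨⟨-, hcurve⟩, hneg⟩ := hsub hlam
  rw [homotopyMap_zero_multiplier fun i => (hneg i).le, hcurve, Prod.mk_zero_zero]

end HomotopyMap

theorem homotopyMap_jacobian_at_start_and_local_zero_curve_general
    {n m : ℕ} (J : EuclideanSpace ℝ (Fin n) → ℝ)
    (g : EuclideanSpace ℝ (Fin n) → ℝ → Fin m → ℝ)
    (a : EuclideanSpace ℝ (Fin n)) (hJ : ContDiffAt ℝ 2 J a)
    (hg : ∀ i, DifferentiableWithinAt ℝ
      (fun q : EuclideanSpace ℝ (Fin n) × ℝ => g q.1 q.2 i) (univ ×ˢ Icc 0 1) (a, 0))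
    (ha : ∀ i, g a 0 i < 0) :
    (∀ v : EuclideanSpace ℝ (Fin n), ∀ ν : Fin m → ℝ,
      fderiv ℝ (fun p : EuclideanSpace ℝ (Fin n) × (Fin m → ℝ) =>
          homotopyMap J g a 0 p.1 p.2) (a, 0) (v, ν)
        = (v, fun i => (-3 * (g a 0 i) ^ 2) * ν i)) ∧
    Function.Bijective
      (fderiv ℝ (fun p : EuclideanSpace ℝ (Fin n) × (Fin m → ℝ) =>
          homotopyMap J g a 0 p.1 p.2) (a, 0)) ∧
    ∃ ε > (0 : ℝ), ∃ u : ℝ → EuclideanSpace ℝ (Fin n), ∃ μ : ℝ → Fin m → ℝ,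
      ContDiffOn ℝ 1 u (Ico 0 ε) ∧ ContDiffOn ℝ 1 μ (Ico 0 ε) ∧
      u 0 = a ∧ μ 0 = 0 ∧
      ∀ lam ∈ Ico (0 : ℝ) ε, homotopyMap J g a lam (u lam) (μ lam) = 0 := by
  have hg_start : ∀ i, DifferentiableAt ℝ (fun v => g v 0 i) a := fun i =>
    differentiableWithinAt_univ.1 <| DifferentiableWithinAt.comp (f := fun v => (v, (0 : ℝ))) a
      (hg i) (differentiableWithinAt_id.prodMk (differentiableWithinAt_const 0))
      fun _ _ => ⟨mem_univ _, left_mem_Icc.2 zero_le_one⟩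
  obtain ⟨ε, hε, u, hu, hu₀, hzero⟩ :=
    exists_contDiffOn_homotopyMap_eq_zero hJ (fun i => (hg i).continuousWithinAt) ha
  rw [(hasFDerivAt_homotopyMap_start hg_start ha).fderiv]
  exact ⟨fun _ _ => rfl, bijective_startJacobian fun i => (ha i).ne,
    ε, hε, u, 0, hu, contDiffOn_const, hu₀, rfl, hzero⟩

/-- If `J`, `g` are C² and `gᵢ(a,0) < 0` for every `i`, then
(i) the Jacobian of `(u,μ) ↦ ρ_a(0,u,μ)` at `(a,0)` is the block map
`(v,ν) ↦ (v, (−3 gᵢ(a,0)² νᵢ)ᵢ)` (blocks `Iₙ` and `0` in the first row,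
lower-right block `diag(−3gᵢ(a,0)²)`), which is in particular nonsingular; and
(ii) there exist `ε > 0` and C¹ functions `u`, `μ` on `[0, ε)` with `u(0) = a`,
`μ(0) = 0` and `ρ_a(λ, u(λ), μ(λ)) = 0` for all `λ ∈ [0, ε)`. -/
theorem homotopyMap_jacobian_at_start_and_local_zero_curve
    {n m : ℕ} (J : EuclideanSpace ℝ (Fin n) → ℝ)
    (g : EuclideanSpace ℝ (Fin n) → ℝ → Fin m → ℝ)
    (hJ : ContDiff ℝ 2 J)
    (hg : ∀ i, ContDiff ℝ 2 (fun q : EuclideanSpace ℝ (Fin n) × ℝ => g q.1 q.2 i))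
    (a : EuclideanSpace ℝ (Fin n)) (ha : ∀ i, g a 0 i < 0) :
    (∀ v : EuclideanSpace ℝ (Fin n), ∀ ν : Fin m → ℝ,
      fderiv ℝ (fun p : EuclideanSpace ℝ (Fin n) × (Fin m → ℝ) =>
          homotopyMap J g a 0 p.1 p.2) (a, 0) (v, ν)
        = (v, fun i => (-3 * (g a 0 i) ^ 2) * ν i)) ∧
    Function.Bijective
      (fderiv ℝ (fun p : EuclideanSpace ℝ (Fin n) × (Fin m → ℝ) =>
          homotopyMap J g a 0 p.1 p.2) (a, 0)) ∧
    ∃ ε > (0 : ℝ), ∃ u : ℝ → EuclideanSpace ℝ (Fin n), ∃ μ : ℝ → Fin m → ℝ,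
      ContDiffOn ℝ 1 u (Set.Ico 0 ε) ∧ ContDiffOn ℝ 1 μ (Set.Ico 0 ε) ∧
      u 0 = a ∧ μ 0 = 0 ∧
      ∀ lam ∈ Set.Ico (0 : ℝ) ε, homotopyMap J g a lam (u lam) (μ lam) = 0 :=
  homotopyMap_jacobian_at_start_and_local_zero_curve_general J g a hJ.contDiffAt
    (fun i => ((hg i).differentiable two_ne_zero _).differentiableWithinAt) ha
end
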